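/- arXiv:math/0204346 — 3 statements merged into one kernel-verified Lean document; each statement's English description precedes it below -/
import Mathlib

section
/- For triples t₁, t₂ with λ₁, λ₂, λ₁+λ₂ nonzero: the maps Y_{t₁,t₂} and Y'_{t₁,t₂} are injective and are gl(1|1)-intertwiners, i.e. X∘Y_{t₁,t₂} = Y_{t₁,t₂}∘X and X∘Y'_{t₁,t₂} = Y'_{t₁,t₂}∘X for each X ∈ {H,D,E,F} (with X acting on the tensor product by the super-Leibniz rule), and V_{t₁}⊗V_{t₂} is the internal direct sum of the images of Y_{t₁,t₂} and Y'_{t₁,t₂}; equivalently, Y_{t₁,t₂}∘L_{t₁,t₂} + Y'_{t₁,t₂}∘L'_{t₁,t₂} is the identity of V_{t₁}⊗V_{t₂}. This realizes the decomposition V_{t₁}⊗V_{t₂} ≅ V_{t₁+t₂+e₂} ⊕ V_{t₁+t₂−e₂+e₃}. -/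
open TensorProduct

noncomputable section

/-- a triple t = (λ, μ, σ) ∈ ℚ × ℚ × ℤ/2 -/
structure Triple where
  lam : ℚ
  mu : ℚ
  sg : ZMod 2

instance : Add Triple := ⟨fun a b => ⟨a.lam + b.lam, a.mu + b.mu, a.sg + b.sg⟩⟩
instance : Neg Triple := ⟨fun a => ⟨-a.lam, -a.mu, -a.sg⟩⟩
instance : Sub Triple := ⟨fun a b => a + -b⟩

def e₂ : Triple := ⟨0, 1, 0⟩
def e₃ : Triple := ⟨0, 0, 1⟩
/-- t* = (−λ, −μ, σ+1) -/
def Triple.star (t : Triple) : Triple := ⟨-t.lam, -t.mu, t.sg + 1⟩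

/-- the underlying space of every V_t: basis v = (1,0) (degree σ), w = (0,1) (degree σ+1) -/
abbrev V : Type := ℚ × ℚ
abbrev VV : Type := V ⊗[ℚ] V
abbrev VVV : Type := V ⊗[ℚ] VV

def vv : V := (1, 0)
def ww : V := (0, 1)

/-- (−1)^σ -/
def sgn (s : ZMod 2) : ℚ := if s = 0 then 1 else -1

/-- H: v ↦ (μ+1)v, w ↦ (μ−1)w -/
def opH (t : Triple) : V →ₗ[ℚ] V :=
  LinearMap.prodMap ((t.mu + 1) • LinearMap.id) ((t.mu - 1) • LinearMap.id)
/-- D: multiplication by λ -/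
def opD (t : Triple) : V →ₗ[ℚ] V := t.lam • LinearMap.id
/-- E: v ↦ 0, w ↦ λv -/
def opE (t : Triple) : V →ₗ[ℚ] V := (LinearMap.inl ℚ ℚ ℚ) ∘ₗ (t.lam • LinearMap.snd ℚ ℚ ℚ)
/-- F: v ↦ w, w ↦ 0 -/
def opF (t : Triple) : V →ₗ[ℚ] V := (LinearMap.inr ℚ ℚ ℚ) ∘ₗ (LinearMap.fst ℚ ℚ ℚ)
/-- the parity operator x ↦ (−1)^{deg x} x on V_t -/
def opJ (t : Triple) : V →ₗ[ℚ] V :=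
  LinearMap.prodMap (sgn t.sg • LinearMap.id) ((- sgn t.sg) • LinearMap.id)

/-- the four generators H, D, E, F of gl(1|1) -/
inductive Gen | H | D | E | F

/-- H and D have degree 0; E and F have degree 1 -/
def Gen.isEven : Gen → Bool
  | .H => true | .D => true | .E => false | .F => false

def op : Gen → Triple → V →ₗ[ℚ] V
  | .H, t => opH t
  | .D, t => opD t
  | .E, t => opE t
  | .F, t => opF t

/-- the super-Leibniz action X·(x⊗y) = (X·x)⊗y + (−1)^{deg X·deg x}·x⊗(X·y)
on V_{t₁}⊗V_{t₂} (the sign being implemented by the parity operator) -/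
def op2 (g : Gen) (t₁ t₂ : Triple) : VV →ₗ[ℚ] VV :=
  TensorProduct.map (op g t₁) LinearMap.id +
  TensorProduct.map (if g.isEven then LinearMap.id else opJ t₁) (op g t₂)

/-- the linear map ℚ×ℚ → M sending (1,0) ↦ p and (0,1) ↦ q -/
def bmap {M : Type*} [AddCommGroup M] [Module ℚ M] (p q : M) : V →ₗ[ℚ] M :=
  LinearMap.coprod (LinearMap.toSpanSingleton ℚ M p) (LinearMap.toSpanSingleton ℚ M q)

/-- Y_{t₁,t₂} : V_{t₁+t₂+e₂} → V_{t₁}⊗V_{t₂} -/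
def Ymap (t₁ t₂ : Triple) : V →ₗ[ℚ] VV :=
  bmap (vv ⊗ₜ[ℚ] vv) (ww ⊗ₜ[ℚ] vv + sgn t₁.sg • (vv ⊗ₜ[ℚ] ww))

/-- Y'_{t₁,t₂} : V_{t₁+t₂−e₂+e₃} → V_{t₁}⊗V_{t₂} -/
def Y'map (t₁ t₂ : Triple) : V →ₗ[ℚ] VV :=
  bmap ((t₁.lam + t₂.lam)⁻¹ •
      (t₁.lam • (vv ⊗ₜ[ℚ] ww) - (sgn t₁.sg * t₂.lam) • (ww ⊗ₜ[ℚ] vv)))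
    (ww ⊗ₜ[ℚ] ww)

/-- L_{t₁,t₂} : V_{t₁}⊗V_{t₂} → V_{t₁+t₂+e₂} -/
def Lmap (t₁ t₂ : Triple) : VV →ₗ[ℚ] V :=
  TensorProduct.lift (LinearMap.mk₂ ℚ
    (fun x y => ((x.1 * y.1 : ℚ),
      (t₁.lam / (t₁.lam + t₂.lam)) * (x.2 * y.1)
        + (sgn t₁.sg * t₂.lam / (t₁.lam + t₂.lam)) * (x.1 * y.2)))
    (by intro x x' y; apply Prod.ext <;> simp <;> ring)
    (by intro a x y; apply Prod.ext <;> simp [smul_eq_mul] <;> ring)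
    (by intro x y y'; apply Prod.ext <;> simp <;> ring)
    (by intro a x y; apply Prod.ext <;> simp [smul_eq_mul] <;> ring))

/-- L'_{t₁,t₂} : V_{t₁}⊗V_{t₂} → V_{t₁+t₂−e₂+e₃} -/
def L'map (t₁ t₂ : Triple) : VV →ₗ[ℚ] V :=
  TensorProduct.lift (LinearMap.mk₂ ℚ
    (fun x y => ((x.1 * y.2 - sgn t₁.sg * (x.2 * y.1) : ℚ), (x.2 * y.2 : ℚ)))
    (by intro x x' y; apply Prod.ext <;> simp <;> ring)
    (by intro a x y; apply Prod.ext <;> simp [smul_eq_mul] <;> ring)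
    (by intro x y y'; apply Prod.ext <;> simp <;> ring)
    (by intro a x y; apply Prod.ext <;> simp [smul_eq_mul] <;> ring))

/-- ∩_t : V_{t*}⊗V_t → ℚ -/
def capMap (t : Triple) : VV →ₗ[ℚ] ℚ :=
  TensorProduct.lift (LinearMap.mk₂ ℚ
    (fun x y => (x.1 * y.2 + sgn t.sg * (x.2 * y.1) : ℚ))
    (by intro x x' y; simp; ring)
    (by intro a x y; simp [smul_eq_mul]; ring)
    (by intro x y y'; simp; ring)
    (by intro a x y; simp [smul_eq_mul]; ring))

/-- ∪_t : ℚ → V_{t*}⊗V_t -/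
def cupMap (t : Triple) : ℚ →ₗ[ℚ] VV :=
  LinearMap.toSpanSingleton ℚ VV (ww ⊗ₜ[ℚ] vv - sgn t.sg • (vv ⊗ₜ[ℚ] ww))

/-!
A vector `p` of a `gl(1|1)`-module with `H p = (μ + 1) p`, `D p = λ p` and `E p = 0` generates an
image of `V_t` by `v ↦ p`, `w ↦ F p`: the relations `[H, F] = -2 F`, `[D, F] = 0`, `EF + FE = D` and
`F² = 0` determine the action on `F p`. The super-Leibniz rule makes `V_{t₁} ⊗ V_{t₂}` a
`gl(1|1)`-module, and `Y`, `Y'` are the maps generated in this way by `v ⊗ v` and by the multiple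
of `λ₁ v ⊗ w - (-1)^σ₁ λ₂ w ⊗ v` which `F` sends to `w ⊗ w`. The maps `L` and `L'` are left inverses
of `Y` and `Y'`, and `Y L + Y' L'` fixes the four basis vectors.
-/

section TensorMap

variable {R M N P Q : Type*} [CommRing R] [AddCommGroup M] [Module R M] [AddCommGroup N]
  [Module R N] [AddCommGroup P] [Module R P] [AddCommGroup Q] [Module R Q]

theorem tensorMap_sub_left (f f' : M →ₗ[R] P) (g : N →ₗ[R] Q) :
    map (f - f') g = map f g - map f' g :=
  LinearMap.map_sub₂ (mapBilinear (RingHom.id R) M N P Q) f f' g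

theorem tensorMap_sub_right (f : M →ₗ[R] P) (g g' : N →ₗ[R] Q) :
    map f (g - g') = map f g - map f g' :=
  map_sub (mapBilinear (RingHom.id R) M N P Q f) g g'

theorem tensorMap_neg_left (f : M →ₗ[R] P) (g : N →ₗ[R] Q) : map (-f) g = -map f g :=
  LinearMap.map_neg₂ (mapBilinear (RingHom.id R) M N P Q) f g

end TensorMap

section SuperLeibniz

variable {R M N : Type*} [CommRing R] [AddCommGroup M] [Module R M] [AddCommGroup N] [Module R N]

/-- The defining relations of `gl(1|1)`, for four operators `X g` on a space `M`. The grading of `M`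
is not recorded; it enters through `IsParity`. -/
structure IsGlOneOneAction (X : Gen → Module.End R M) : Prop where
  lie_H_E : ⁅X .H, X .E⁆ = (2 : R) • X .E
  lie_H_F : ⁅X .H, X .F⁆ = (-2 : R) • X .F
  lie_D (g : Gen) : ⁅X .D, X g⁆ = 0
  E_mul_E : X .E * X .E = 0
  F_mul_F : X .F * X .F = 0
  E_mul_F_add_F_mul_E : X .E * X .F + X .F * X .E = X .D

/-- `J` is an involution commuting with the even and anticommuting with the odd operators `X g`, as
the operator `x ↦ (-1)^(deg x) x` of a `ℤ/2`-graded `gl(1|1)`-module does. -/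
structure IsParity (J : Module.End R M) (X : Gen → Module.End R M) : Prop where
  mul_self : J * J = 1
  mul_of_even (g : Gen) : g.isEven = true → J * X g = X g * J
  mul_of_odd (g : Gen) : g.isEven = false → J * X g = -(X g * J)

/-- The super-Leibniz action on `M ⊗ N` of operators `X` on `M` and `Y` on `N`, where `J` is the
parity operator of `M`. -/
def superLeibniz (J : Module.End R M) (X : Gen → Module.End R M) (Y : Gen → Module.End R N)
    (g : Gen) : Module.End R (M ⊗[R] N) :=
  map (X g) 1 + map (if g.isEven then 1 else J) (Y g)

variable {J : Module.End R M} {X : Gen → Module.End R M} {Y : Gen → Module.End R N}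

theorem lie_superLeibniz_of_even (hJ : IsParity J X) {g : Gen} (hg : g.isEven = true) (h : Gen) :
    ⁅superLeibniz J X Y g, superLeibniz J X Y h⁆ =
      map ⁅X g, X h⁆ 1 + map (if h.isEven then 1 else J) ⁅Y g, Y h⁆ := by
  have twist_comm : X g * (if h.isEven then 1 else J) = (if h.isEven then 1 else J) * X g := by
    split_ifs
    · rw [mul_one, one_mul]
    · exact (hJ.mul_of_even g hg).symm
  simp only [superLeibniz, hg, if_true, Ring.lie_def, mul_add, add_mul, ← TensorProduct.map_mul,
    mul_one, one_mul, twist_comm, tensorMap_sub_left, tensorMap_sub_right]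
  abel

theorem superLeibniz_mul_of_odd (hJ : IsParity J X) {g h : Gen} (hg : g.isEven = false)
    (hh : h.isEven = false) :
    superLeibniz J X Y g * superLeibniz J X Y h =
      map (X g * X h) 1 + map 1 (Y g * Y h) + (map (X g * J) (Y h) - map (X h * J) (Y g)) := by
  simp only [superLeibniz, hg, hh, Bool.false_eq_true, if_false, mul_add, add_mul,
    ← TensorProduct.map_mul, mul_one, one_mul, hJ.mul_self, hJ.mul_of_odd h hh, tensorMap_neg_left]
  abel

theorem superLeibniz_mul_self_of_odd (hJ : IsParity J X) {g : Gen} (hg : g.isEven = false)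
    (hX : X g * X g = 0) (hY : Y g * Y g = 0) :
    superLeibniz J X Y g * superLeibniz J X Y g = 0 := by
  simp [superLeibniz_mul_of_odd hJ hg hg, hX, hY]

theorem superLeibniz_anticommutator_of_odd (hJ : IsParity J X) {g h : Gen}
    (hg : g.isEven = false) (hh : h.isEven = false) :
    superLeibniz J X Y g * superLeibniz J X Y h + superLeibniz J X Y h * superLeibniz J X Y g =
      map (X g * X h + X h * X g) 1 + map 1 (Y g * Y h + Y h * Y g) := by
  rw [superLeibniz_mul_of_odd hJ hg hh, superLeibniz_mul_of_odd hJ hh hg,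
    TensorProduct.map_add_left, TensorProduct.map_add_right]
  abel

theorem isGlOneOneAction_superLeibniz (hJ : IsParity J X) (hX : IsGlOneOneAction X)
    (hY : IsGlOneOneAction Y) : IsGlOneOneAction (superLeibniz J X Y) where
  lie_H_E := by
    rw [lie_superLeibniz_of_even hJ rfl, hX.lie_H_E, hY.lie_H_E, TensorProduct.map_smul_left,
      TensorProduct.map_smul_right, ← smul_add, superLeibniz]
  lie_H_F := by
    rw [lie_superLeibniz_of_even hJ rfl, hX.lie_H_F, hY.lie_H_F, TensorProduct.map_smul_left,
      TensorProduct.map_smul_right, ← smul_add, superLeibniz]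
  lie_D g := by
    rw [lie_superLeibniz_of_even hJ rfl, hX.lie_D, hY.lie_D, TensorProduct.map_zero_left,
      TensorProduct.map_zero_right, add_zero]
  E_mul_E := superLeibniz_mul_self_of_odd hJ rfl hX.E_mul_E hY.E_mul_E
  F_mul_F := superLeibniz_mul_self_of_odd hJ rfl hX.F_mul_F hY.F_mul_F
  E_mul_F_add_F_mul_E := by
    rw [superLeibniz_anticommutator_of_odd hJ rfl rfl, hX.E_mul_F_add_F_mul_E,
      hY.E_mul_F_add_F_mul_E]
    rfl

end SuperLeibniz

theorem sgn_mul_self (s : ZMod 2) : sgn s * sgn s = 1 := by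
  unfold sgn
  split_ifs <;> norm_num

@[simp]
theorem bmap_vv {M : Type*} [AddCommGroup M] [Module ℚ M] (p q : M) : bmap p q vv = p := by
  simp [bmap, vv]

@[simp]
theorem bmap_ww {M : Type*} [AddCommGroup M] [Module ℚ M] (p q : M) : bmap p q ww = q := by
  simp [bmap, ww]

section Ext

variable {M : Type*} [AddCommMonoid M] [Module ℚ M]

theorem V.linearMap_ext {f g : V →ₗ[ℚ] M} (hv : f vv = g vv) (hw : f ww = g ww) : f = g :=
  LinearMap.prod_ext (LinearMap.ext_ring hv) (LinearMap.ext_ring hw)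

theorem VV.linearMap_ext {f g : VV →ₗ[ℚ] M}
    (hvv : f (vv ⊗ₜ vv) = g (vv ⊗ₜ vv)) (hvw : f (vv ⊗ₜ ww) = g (vv ⊗ₜ ww))
    (hwv : f (ww ⊗ₜ vv) = g (ww ⊗ₜ vv)) (hww : f (ww ⊗ₜ ww) = g (ww ⊗ₜ ww)) : f = g :=
  TensorProduct.ext <|
    V.linearMap_ext (V.linearMap_ext hvv hvw) (V.linearMap_ext hwv hww)

end Ext

section Action

variable (t : Triple)

@[simp] theorem op_H_vv : op .H t vv = (t.mu + 1) • vv := by simp [op, opH, vv]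

@[simp] theorem op_H_ww : op .H t ww = (t.mu - 1) • ww := by simp [op, opH, ww]

@[simp] theorem op_D_apply (x : V) : op .D t x = t.lam • x := rfl

@[simp] theorem op_E_vv : op .E t vv = 0 := by simp [op, opE, vv]

@[simp] theorem op_E_ww : op .E t ww = t.lam • vv := by simp [op, opE, vv, ww]

@[simp] theorem op_F_vv : op .F t vv = ww := by simp [op, opF, vv, ww]

@[simp] theorem op_F_ww : op .F t ww = 0 := by simp [op, opF, ww]

@[simp] theorem opJ_vv : opJ t vv = sgn t.sg • vv := by simp [opJ, vv]

@[simp] theorem opJ_ww : opJ t ww = -sgn t.sg • ww := by simp [opJ, ww]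

theorem isGlOneOneAction_op : IsGlOneOneAction fun g => op g t where
  lie_H_E := by
    apply V.linearMap_ext
    · simp [Ring.lie_def]
    · simp only [Ring.lie_def, LinearMap.sub_apply, LinearMap.smul_apply, Module.End.mul_apply,
        op_E_ww, op_H_vv, op_H_ww, map_smul]
      module
  lie_H_F := by
    apply V.linearMap_ext
    · simp only [Ring.lie_def, LinearMap.sub_apply, LinearMap.smul_apply, Module.End.mul_apply,
        op_F_vv, op_H_vv, op_H_ww, map_smul]
      module
    · simp [Ring.lie_def]
  lie_D g := by apply V.linearMap_ext <;> simp [Ring.lie_def]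
  E_mul_E := by apply V.linearMap_ext <;> simp
  F_mul_F := by apply V.linearMap_ext <;> simp
  E_mul_F_add_F_mul_E := by apply V.linearMap_ext <;> simp

theorem isParity_opJ : IsParity (opJ t) fun g => op g t where
  mul_self := by apply V.linearMap_ext <;> simp [smul_smul, sgn_mul_self]
  mul_of_even
    | .H, _ => by apply V.linearMap_ext <;> simp [smul_smul, mul_comm]
    | .D, _ => LinearMap.ext fun x => by simp
  mul_of_odd
    | .E, _ => by apply V.linearMap_ext <;> simp [smul_smul, mul_comm]
    | .F, _ => by apply V.linearMap_ext <;> simp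

theorem isGlOneOneAction_op2 (t₁ t₂ : Triple) : IsGlOneOneAction fun g => op2 g t₁ t₂ :=
  isGlOneOneAction_superLeibniz (isParity_opJ t₁) (isGlOneOneAction_op t₁) (isGlOneOneAction_op t₂)

end Action

theorem IsGlOneOneAction.bmap_intertwines {M : Type*} [AddCommGroup M] [Module ℚ M]
    {X : Gen → Module.End ℚ M} (hX : IsGlOneOneAction X) {t : Triple} {p q : M}
    (hH : X .H p = (t.mu + 1) • p) (hD : X .D p = t.lam • p) (hE : X .E p = 0)
    (hF : X .F p = q) (g : Gen) :
    X g ∘ₗ bmap p q = bmap p q ∘ₗ op g t := by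
  subst hF
  have H_F : X .H (X .F p) = (t.mu - 1) • X .F p := by
    have lie_H_F : X .H (X .F p) - X .F (X .H p) = (-2 : ℚ) • X .F p :=
      LinearMap.congr_fun hX.lie_H_F p
    rw [hH, map_smul, sub_eq_iff_eq_add] at lie_H_F
    rw [lie_H_F]
    module
  have D_F : X .D (X .F p) = t.lam • X .F p := by
    have lie_D_F : X .D (X .F p) - X .F (X .D p) = 0 := LinearMap.congr_fun (hX.lie_D .F) p
    rw [sub_eq_zero.mp lie_D_F, hD, map_smul]
  have E_F : X .E (X .F p) = t.lam • p := by
    have anticommutator : X .E (X .F p) + X .F (X .E p) = X .D p :=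
      LinearMap.congr_fun hX.E_mul_F_add_F_mul_E p
    rwa [hE, map_zero, add_zero, hD] at anticommutator
  have F_F : X .F (X .F p) = 0 := LinearMap.congr_fun hX.F_mul_F p
  cases g <;> apply V.linearMap_ext <;> simp [*]

section Evaluation

variable (t₁ t₂ : Triple)

theorem op2_H_tmul (x y : V) :
    op2 .H t₁ t₂ (x ⊗ₜ y) = op .H t₁ x ⊗ₜ y + x ⊗ₜ op .H t₂ y := rfl

theorem op2_D_apply (z : VV) : op2 .D t₁ t₂ z = (t₁.lam + t₂.lam) • z := by
  have op2_D : op2 .D t₁ t₂ = (t₁.lam + t₂.lam) • LinearMap.id := by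
    simp [op2, op, opD, Gen.isEven, TensorProduct.map_smul_left, TensorProduct.map_smul_right,
      add_smul]
  rw [op2_D, LinearMap.smul_apply, LinearMap.id_apply]

theorem op2_E_tmul (x y : V) :
    op2 .E t₁ t₂ (x ⊗ₜ y) = op .E t₁ x ⊗ₜ y + opJ t₁ x ⊗ₜ op .E t₂ y := rfl

theorem op2_F_tmul (x y : V) :
    op2 .F t₁ t₂ (x ⊗ₜ y) = op .F t₁ x ⊗ₜ y + opJ t₁ x ⊗ₜ op .F t₂ y := rfl

@[simp] theorem Lmap_vv_vv : Lmap t₁ t₂ (vv ⊗ₜ vv) = vv := by simp [Lmap, vv]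

@[simp]
theorem Lmap_vv_ww :
    Lmap t₁ t₂ (vv ⊗ₜ ww) = (sgn t₁.sg * t₂.lam / (t₁.lam + t₂.lam)) • ww := by
  simp [Lmap, vv, ww]

@[simp]
theorem Lmap_ww_vv : Lmap t₁ t₂ (ww ⊗ₜ vv) = (t₁.lam / (t₁.lam + t₂.lam)) • ww := by
  simp [Lmap, vv, ww]

@[simp] theorem Lmap_ww_ww : Lmap t₁ t₂ (ww ⊗ₜ ww) = 0 := by simp [Lmap, ww]

@[simp] theorem L'map_vv_vv : L'map t₁ t₂ (vv ⊗ₜ vv) = 0 := by simp [L'map, vv]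

@[simp] theorem L'map_vv_ww : L'map t₁ t₂ (vv ⊗ₜ ww) = vv := by simp [L'map, vv, ww]

@[simp]
theorem L'map_ww_vv : L'map t₁ t₂ (ww ⊗ₜ vv) = -sgn t₁.sg • vv := by simp [L'map, vv, ww]

@[simp] theorem L'map_ww_ww : L'map t₁ t₂ (ww ⊗ₜ ww) = ww := by simp [L'map, ww]

end Evaluation

theorem Ymap_intertwines (t₁ t₂ : Triple) (g : Gen) :
    op2 g t₁ t₂ ∘ₗ Ymap t₁ t₂ = Ymap t₁ t₂ ∘ₗ op g (t₁ + t₂ + e₂) := by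
  have hlam : (t₁ + t₂ + e₂).lam = t₁.lam + t₂.lam := add_zero _
  have hmu : (t₁ + t₂ + e₂).mu = t₁.mu + t₂.mu + 1 := rfl
  refine (isGlOneOneAction_op2 t₁ t₂).bmap_intertwines ?_ ?_ ?_ ?_ g
  · simp only [op2_H_tmul, op_H_vv, ← smul_tmul', tmul_smul, hmu]
    module
  · rw [op2_D_apply, hlam]
  · simp [op2_E_tmul]
  · simp [op2_F_tmul, ← smul_tmul']

section Decomposition

variable {t₁ t₂ : Triple}

theorem Y'map_intertwines (h₁₂ : t₁.lam + t₂.lam ≠ 0) (g : Gen) :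
    op2 g t₁ t₂ ∘ₗ Y'map t₁ t₂ = Y'map t₁ t₂ ∘ₗ op g (t₁ + t₂ - e₂ + e₃) := by
  have hlam : (t₁ + t₂ - e₂ + e₃).lam = t₁.lam + t₂.lam := by
    change t₁.lam + t₂.lam + -0 + 0 = _
    ring
  have hmu : (t₁ + t₂ - e₂ + e₃).mu = t₁.mu + t₂.mu - 1 := by
    change t₁.mu + t₂.mu + -1 + 0 = _
    ring
  refine (isGlOneOneAction_op2 t₁ t₂).bmap_intertwines ?_ ?_ ?_ ?_ g
  · simp only [map_smul, map_sub, op2_H_tmul, op_H_vv, op_H_ww, ← smul_tmul', tmul_smul, hmu]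
    module
  · rw [op2_D_apply, hlam]
  · simp only [map_smul, map_sub, op2_E_tmul, op_E_vv, op_E_ww, opJ_vv, zero_tmul, tmul_zero,
      ← smul_tmul', tmul_smul]
    module
  · simp only [map_smul, map_sub, op2_F_tmul, op_F_vv, op_F_ww, opJ_ww, zero_tmul, tmul_zero,
      ← smul_tmul', zero_add, add_zero]
    match_scalars
    field_simp
    linear_combination t₂.lam * sgn_mul_self t₁.sg

theorem Lmap_comp_Ymap (h₁₂ : t₁.lam + t₂.lam ≠ 0) :
    Lmap t₁ t₂ ∘ₗ Ymap t₁ t₂ = LinearMap.id := by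
  apply V.linearMap_ext
  · simp [Ymap]
  · simp only [Ymap, LinearMap.comp_apply, bmap_ww, map_add, map_smul, Lmap_ww_vv, Lmap_vv_ww,
      LinearMap.id_apply]
    match_scalars
    field_simp
    linear_combination t₂.lam * sgn_mul_self t₁.sg

theorem L'map_comp_Y'map (h₁₂ : t₁.lam + t₂.lam ≠ 0) :
    L'map t₁ t₂ ∘ₗ Y'map t₁ t₂ = LinearMap.id := by
  apply V.linearMap_ext
  · simp only [Y'map, LinearMap.comp_apply, bmap_vv, map_sub, map_smul, L'map_ww_vv, L'map_vv_ww,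
      LinearMap.id_apply]
    match_scalars
    field_simp
    linear_combination t₂.lam * sgn_mul_self t₁.sg
  · simp [Y'map]

theorem Ymap_comp_Lmap_add_Y'map_comp_L'map (h₁₂ : t₁.lam + t₂.lam ≠ 0) :
    Ymap t₁ t₂ ∘ₗ Lmap t₁ t₂ + Y'map t₁ t₂ ∘ₗ L'map t₁ t₂ = LinearMap.id := by
  apply VV.linearMap_ext
  · simp [Ymap]
  · simp only [Ymap, Y'map, LinearMap.add_apply, LinearMap.comp_apply, Lmap_vv_ww, L'map_vv_ww,
      map_smul, bmap_ww, bmap_vv, LinearMap.id_apply]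
    match_scalars
    · field_simp
      ring
    · field_simp
      linear_combination t₂.lam * sgn_mul_self t₁.sg
  · simp only [Ymap, Y'map, LinearMap.add_apply, LinearMap.comp_apply, Lmap_ww_vv, L'map_ww_vv,
      map_smul, bmap_ww, bmap_vv, LinearMap.id_apply]
    match_scalars
    · field_simp
      linear_combination t₂.lam * sgn_mul_self t₁.sg
    · field_simp
      ring
  · simp [Y'map]

end Decomposition

/-- Y and Y' are injective gl(1|1)-intertwiners and realize
V_{t₁}⊗V_{t₂} ≅ V_{t₁+t₂+e₂} ⊕ V_{t₁+t₂−e₂+e₃}. -/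
theorem stmt7 (t₁ t₂ : Triple) (h₁ : t₁.lam ≠ 0) (h₂ : t₂.lam ≠ 0)
    (h₁₂ : t₁.lam + t₂.lam ≠ 0) :
    Function.Injective (Ymap t₁ t₂) ∧ Function.Injective (Y'map t₁ t₂) ∧
    (∀ g : Gen, op2 g t₁ t₂ ∘ₗ Ymap t₁ t₂ = Ymap t₁ t₂ ∘ₗ op g (t₁ + t₂ + e₂)) ∧
    (∀ g : Gen, op2 g t₁ t₂ ∘ₗ Y'map t₁ t₂ = Y'map t₁ t₂ ∘ₗ op g (t₁ + t₂ - e₂ + e₃)) ∧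
    Ymap t₁ t₂ ∘ₗ Lmap t₁ t₂ + Y'map t₁ t₂ ∘ₗ L'map t₁ t₂ = LinearMap.id :=
  ⟨LinearMap.injective_of_comp_eq_id _ _ (Lmap_comp_Ymap h₁₂),
    LinearMap.injective_of_comp_eq_id _ _ (L'map_comp_Y'map h₁₂),
    Ymap_intertwines t₁ t₂, Y'map_intertwines h₁₂, Ymap_comp_Lmap_add_Y'map_comp_L'map h₁₂⟩

end
end

section
/- For every triple t = (λ,μ,σ) with λ ≠ 0, the duality maps satisfy the zigzag identities (∩_{t*}⊗I_t)∘(I_t⊗∪_t) = I_t = (I_t⊗∩_t)∘(∪_{t*}⊗I_t) as linear endomorphisms of V_t, where I_t is the identity of V_t and V_{t**} is identified with V_t. -/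
open TensorProduct

noncomputable section

/-!
The element `∪_t 1` is a sum `∑ i, y i ⊗ b i`, where `b = (v, w)` is the basis of `V_t` and
`y = (w, -(-1)^σ v)` is the family in `V_{t*}` dual to `b` under `∩_{t*}`. The first zigzag
therefore expands a vector in the basis `b`, reading off its coordinates with `∩_{t*}`. The second
one does the same with `∪_{t*}`, `∩_t` and the dual family `((-1)^σ w, v)`. The signs match because
the parity shift in `t*` gives `(-1)^{σ+1} = -(-1)^σ`.
-/

section Zigzag

variable {R M N : Type*} [CommSemiring R] [AddCommMonoid M] [AddCommMonoid N] [Module R M]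
  [Module R N]

/-- The zigzag endomorphism `(f ⊗ I) ∘ (I ⊗ g)` of `M` formed from an evaluation `f` and a
coevaluation `g`, with the unitors and the associator written out. -/
def leftZigzag (f : M ⊗[R] N →ₗ[R] R) (g : R →ₗ[R] N ⊗[R] M) : M →ₗ[R] M :=
  (TensorProduct.lid R M).toLinearMap
    ∘ₗ TensorProduct.map f LinearMap.id
    ∘ₗ (TensorProduct.assoc R M N M).symm.toLinearMap
    ∘ₗ TensorProduct.map LinearMap.id g
    ∘ₗ (TensorProduct.rid R M).symm.toLinearMap

/-- The zigzag endomorphism `(I ⊗ f) ∘ (g ⊗ I)` of `M` formed from an evaluation `f` and a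
coevaluation `g`, with the unitors and the associator written out. -/
def rightZigzag (f : N ⊗[R] M →ₗ[R] R) (g : R →ₗ[R] M ⊗[R] N) : M →ₗ[R] M :=
  (TensorProduct.rid R M).toLinearMap
    ∘ₗ TensorProduct.map LinearMap.id f
    ∘ₗ (TensorProduct.assoc R M N M).toLinearMap
    ∘ₗ TensorProduct.map g LinearMap.id
    ∘ₗ (TensorProduct.lid R M).symm.toLinearMap

variable {ι : Type*} [Fintype ι]

theorem leftZigzag_apply_of_eq_sum (f : M ⊗[R] N →ₗ[R] R) {g : R →ₗ[R] N ⊗[R] M}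
    {y : ι → N} {z : ι → M} (hg : g 1 = ∑ i, y i ⊗ₜ[R] z i) (x : M) :
    leftZigzag f g x = ∑ i, f (x ⊗ₜ y i) • z i := by
  simp [leftZigzag, hg, TensorProduct.tmul_sum]

theorem rightZigzag_apply_of_eq_sum (f : N ⊗[R] M →ₗ[R] R) {g : R →ₗ[R] M ⊗[R] N}
    {y : ι → N} {z : ι → M} (hg : g 1 = ∑ i, z i ⊗ₜ[R] y i) (x : M) :
    rightZigzag f g x = ∑ i, f (y i ⊗ₜ x) • z i := by
  simp [rightZigzag, hg, TensorProduct.sum_tmul]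

variable [DecidableEq ι]

theorem leftZigzag_eq_id_of_dual (b : Module.Basis ι R M) {y : ι → N}
    {f : M ⊗[R] N →ₗ[R] R} {g : R →ₗ[R] N ⊗[R] M}
    (hf : ∀ i j, f (b i ⊗ₜ y j) = if i = j then 1 else 0) (hg : g 1 = ∑ i, y i ⊗ₜ[R] b i) :
    leftZigzag f g = LinearMap.id :=
  b.ext fun i => by simp [leftZigzag_apply_of_eq_sum f hg, hf]

theorem rightZigzag_eq_id_of_dual (b : Module.Basis ι R M) {y : ι → N}
    {f : N ⊗[R] M →ₗ[R] R} {g : R →ₗ[R] M ⊗[R] N}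
    (hf : ∀ i j, f (y i ⊗ₜ b j) = if i = j then 1 else 0) (hg : g 1 = ∑ i, b i ⊗ₜ[R] y i) :
    rightZigzag f g = LinearMap.id :=
  b.ext fun i => by simp [rightZigzag_apply_of_eq_sum f hg, hf]

end Zigzag

theorem sgn_add_one (s : ZMod 2) : sgn (s + 1) = -sgn s := by
  fin_cases s <;> rfl

theorem sgn_star (t : Triple) : sgn t.star.sg = -sgn t.sg :=
  sgn_add_one t.sg

theorem capMap_tmul (t : Triple) (x y : V) :
    capMap t (x ⊗ₜ y) = x.1 * y.2 + sgn t.sg * (x.2 * y.1) :=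
  rfl

theorem cupMap_one (t : Triple) :
    cupMap t 1 = ww ⊗ₜ[ℚ] vv - sgn t.sg • (vv ⊗ₜ[ℚ] ww) :=
  one_smul ℚ _

/-- The basis `(v_t, w_t)` of `V_t`. -/
def basisVW : Module.Basis (Fin 2) ℚ V :=
  Module.Basis.finTwoProd ℚ

theorem basisVW_zero : basisVW 0 = vv :=
  Module.Basis.finTwoProd_zero ℚ

theorem basisVW_one : basisVW 1 = ww :=
  Module.Basis.finTwoProd_one ℚ

/-- The family in `V_{t*}` dual to `(v_t, w_t)` under `∩_{t*} : V_t ⊗ V_{t*} → ℚ`. -/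
def rightDual (t : Triple) : Fin 2 → V :=
  ![ww, -sgn t.sg • vv]

/-- The family in `V_{t*}` dual to `(v_t, w_t)` under `∩_t : V_{t*} ⊗ V_t → ℚ`. -/
def leftDual (t : Triple) : Fin 2 → V :=
  ![sgn t.sg • ww, vv]

theorem capMap_star_basisVW_tmul_rightDual (t : Triple) (i j : Fin 2) :
    capMap t.star (basisVW i ⊗ₜ rightDual t j) = if i = j then 1 else 0 := by
  fin_cases i <;> fin_cases j <;>
    simp [capMap_tmul, sgn_star, basisVW_zero, basisVW_one, rightDual, vv, ww, sgn_mul_self]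

theorem capMap_leftDual_tmul_basisVW (t : Triple) (i j : Fin 2) :
    capMap t (leftDual t i ⊗ₜ basisVW j) = if i = j then 1 else 0 := by
  fin_cases i <;> fin_cases j <;>
    simp [capMap_tmul, basisVW_zero, basisVW_one, leftDual, vv, ww, sgn_mul_self]

theorem cupMap_one_eq_sum_rightDual_tmul (t : Triple) :
    cupMap t 1 = ∑ i, rightDual t i ⊗ₜ[ℚ] basisVW i := by
  simp [cupMap_one, basisVW_zero, basisVW_one, rightDual, TensorProduct.neg_tmul,
    TensorProduct.smul_tmul', sub_eq_add_neg]

theorem cupMap_star_one_eq_sum_tmul_leftDual (t : Triple) :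
    cupMap t.star 1 = ∑ i, basisVW i ⊗ₜ[ℚ] leftDual t i := by
  simp [cupMap_one, sgn_star, basisVW_zero, basisVW_one, leftDual, TensorProduct.neg_tmul,
    TensorProduct.smul_tmul', add_comm]

/-- the zigzag identities
(∩_{t*}⊗I_t)∘(I_t⊗∪_t) = I_t = (I_t⊗∩_t)∘(∪_{t*}⊗I_t). -/
theorem stmt8 (t : Triple) (ht : t.lam ≠ 0) :
    ((TensorProduct.lid ℚ V).toLinearMap
      ∘ₗ TensorProduct.map (capMap t.star) LinearMap.id
      ∘ₗ (TensorProduct.assoc ℚ V V V).symm.toLinearMap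
      ∘ₗ TensorProduct.map LinearMap.id (cupMap t)
      ∘ₗ (TensorProduct.rid ℚ V).symm.toLinearMap) = LinearMap.id ∧
    ((TensorProduct.rid ℚ V).toLinearMap
      ∘ₗ TensorProduct.map LinearMap.id (capMap t)
      ∘ₗ (TensorProduct.assoc ℚ V V V).toLinearMap
      ∘ₗ TensorProduct.map (cupMap t.star) LinearMap.id
      ∘ₗ (TensorProduct.lid ℚ V).symm.toLinearMap) = LinearMap.id := by
  constructor
  · exact leftZigzag_eq_id_of_dual basisVW (capMap_star_basisVW_tmul_rightDual t)
      (cupMap_one_eq_sum_rightDual_tmul t)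
  · exact rightZigzag_eq_id_of_dual basisVW (capMap_leftDual_tmul_basisVW t)
      (cupMap_star_one_eq_sum_tmul_leftDual t)

end
end

section
/- The following associativity identities hold: (I_{t₁}⊗Y_{t₂,t₃})∘Y_{t₁,t₆} = (Y_{t₁,t₂}⊗I_{t₃})∘Y_{t₄,t₃} as linear maps V_{t₅} → V_{t₁}⊗V_{t₂}⊗V_{t₃}; (I_{t₁}⊗Y'_{t₂,t₃})∘Y'_{t₁,t₉} = (Y'_{t₁,t₂}⊗I_{t₃})∘Y'_{t₇,t₃} as linear maps from V_{t₁+t₉−e₂+e₃} = V_{t₇+t₃−e₂+e₃} to V_{t₁}⊗V_{t₂}⊗V_{t₃}; L_{t₁,t₆}∘(I_{t₁}⊗L_{t₂,t₃}) = L_{t₄,t₃}∘(L_{t₁,t₂}⊗I_{t₃}) as linear maps V_{t₁}⊗V_{t₂}⊗V_{t₃} → V_{t₅}; and L'_{t₁,t₉}∘(I_{t₁}⊗L'_{t₂,t₃}) = L'_{t₇,t₃}∘(L'_{t₁,t₂}⊗I_{t₃}) as linear maps V_{t₁}⊗V_{t₂}⊗V_{t₃} → V_{t₁+t₉−e₂+e₃}.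 -/
open TensorProduct

noncomputable section

/-- t₄ = t₁+t₂+e₂ -/
def T4 (t₁ t₂ : Triple) : Triple := t₁ + t₂ + e₂
/-- t₅ = t₄+t₃+e₂ -/
def T5 (t₁ t₂ t₃ : Triple) : Triple := T4 t₁ t₂ + t₃ + e₂
/-- t₆ = t₂+t₃+e₂ -/
def T6 (t₂ t₃ : Triple) : Triple := t₂ + t₃ + e₂
/-- t₇ = t₄−2e₂+e₃ -/
def T7 (t₁ t₂ : Triple) : Triple := T4 t₁ t₂ - e₂ - e₂ + e₃
/-- t₈ = t₅−2e₂+e₃ -/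
def T8 (t₁ t₂ t₃ : Triple) : Triple := T5 t₁ t₂ t₃ - e₂ - e₂ + e₃
/-- t₉ = t₆−2e₂+e₃ -/
def T9 (t₂ t₃ : Triple) : Triple := T6 t₂ t₃ - e₂ - e₂ + e₃
/-- κ = λ₂(λ₁+λ₂+λ₃)/((λ₁+λ₂)(λ₂+λ₃)) -/
def kap (t₁ t₂ t₃ : Triple) : ℚ :=
  t₂.lam * (t₁.lam + t₂.lam + t₃.lam) / ((t₁.lam + t₂.lam) * (t₂.lam + t₃.lam))

/-!
Each of the four maps is a change of basis away from the multiplication or the comultiplication of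
dual numbers, with `ε` scaled by a sign `s = ±(-1)^σ₁` in the second factor. For `Y` and `L` the
unit is `v` and `ε` is a multiple of `w`; for `Y'` and `L'` the unit is `w` and `ε` is a multiple
of `v`. In `L` and `Y'`, rescaling `ε` by `λ` absorbs the coefficients `λᵢ / (λ₁ + λ₂)`, and the
scalings on the intermediate space cancel because `λ₁ + λ₂` and `λ₂ + λ₃` are invertible.
What remains is (co)associativity of the twisted structure, in which signs multiply:
`x *ₛ (y *ᵣ z) = (x *ₛ y) *ₛᵣ z`.
-/

section Transport

variable {R M : Type*} [CommSemiring R] [AddCommMonoid M] [Module R M]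

theorem mul_assoc_transport {m₁ m₂ m₁₂ : M ⊗[R] M →ₗ[R] M}
    (hm : m₁ ∘ₗ TensorProduct.map LinearMap.id m₂ =
      m₁₂ ∘ₗ TensorProduct.map m₁ LinearMap.id ∘ₗ (TensorProduct.assoc R M M M).symm.toLinearMap)
    {a₁₂ b₁₂ a₂₃ b₂₃ : M →ₗ[R] M} (h₁₂ : a₁₂ ∘ₗ b₁₂ = LinearMap.id)
    (h₂₃ : a₂₃ ∘ₗ b₂₃ = LinearMap.id) (a₁ a₂ a₃ b : M →ₗ[R] M) :
    (b ∘ₗ m₁ ∘ₗ TensorProduct.map a₁ a₂₃) ∘ₗ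
        TensorProduct.map LinearMap.id (b₂₃ ∘ₗ m₂ ∘ₗ TensorProduct.map a₂ a₃) =
      (b ∘ₗ m₁₂ ∘ₗ TensorProduct.map a₁₂ a₃) ∘ₗ
        TensorProduct.map (b₁₂ ∘ₗ m₁ ∘ₗ TensorProduct.map a₁ a₂) LinearMap.id ∘ₗ
          (TensorProduct.assoc R M M M).symm.toLinearMap := by
  refine TensorProduct.ext_threefold' fun x y z => ?_
  have cancel₁₂ (u : M) : a₁₂ (b₁₂ u) = u := LinearMap.congr_fun h₁₂ u
  have cancel₂₃ (u : M) : a₂₃ (b₂₃ u) = u := LinearMap.congr_fun h₂₃ u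
  have hxyz : m₁ (a₁ x ⊗ₜ m₂ (a₂ y ⊗ₜ a₃ z)) = m₁₂ (m₁ (a₁ x ⊗ₜ a₂ y) ⊗ₜ a₃ z) :=
    LinearMap.congr_fun hm (a₁ x ⊗ₜ (a₂ y ⊗ₜ a₃ z))
  simp [cancel₁₂, cancel₂₃, hxyz]

theorem comul_coassoc_transport {d₁ d₂ d₁₂ : M →ₗ[R] M ⊗[R] M}
    (hd : TensorProduct.map LinearMap.id d₂ ∘ₗ d₁ =
      (TensorProduct.assoc R M M M).toLinearMap ∘ₗ TensorProduct.map d₁ LinearMap.id ∘ₗ d₁₂)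
    {a₁₂ b₁₂ a₂₃ b₂₃ : M →ₗ[R] M} (h₁₂ : b₁₂ ∘ₗ a₁₂ = LinearMap.id)
    (h₂₃ : b₂₃ ∘ₗ a₂₃ = LinearMap.id) (a₁ a₂ a₃ b : M →ₗ[R] M) :
    TensorProduct.map LinearMap.id (TensorProduct.map a₂ a₃ ∘ₗ d₂ ∘ₗ b₂₃) ∘ₗ
        (TensorProduct.map a₁ a₂₃ ∘ₗ d₁ ∘ₗ b) =
      (TensorProduct.assoc R M M M).toLinearMap ∘ₗ
        TensorProduct.map (TensorProduct.map a₁ a₂ ∘ₗ d₁ ∘ₗ b₁₂) LinearMap.id ∘ₗ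
          (TensorProduct.map a₁₂ a₃ ∘ₗ d₁₂ ∘ₗ b) := by
  calc
    _ = TensorProduct.map a₁ (TensorProduct.map a₂ a₃) ∘ₗ
          (TensorProduct.map LinearMap.id d₂ ∘ₗ d₁) ∘ₗ b := by
      simp only [← LinearMap.comp_assoc, ← TensorProduct.map_comp, LinearMap.id_comp,
        LinearMap.comp_id]
      simp only [LinearMap.comp_assoc, h₂₃, LinearMap.comp_id]
    _ = (TensorProduct.map a₁ (TensorProduct.map a₂ a₃) ∘ₗ
          (TensorProduct.assoc R M M M).toLinearMap) ∘ₗ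
            TensorProduct.map d₁ LinearMap.id ∘ₗ d₁₂ ∘ₗ b := by
      simp only [hd, LinearMap.comp_assoc]
    _ = _ := by
      rw [TensorProduct.map_map_comp_assoc_eq]
      simp only [LinearMap.comp_assoc]
      congr 1
      simp only [← LinearMap.comp_assoc, ← TensorProduct.map_comp, LinearMap.id_comp,
        LinearMap.comp_id]
      simp only [LinearMap.comp_assoc, h₁₂, LinearMap.comp_id]

end Transport

section TwistedDualNumbers

variable {R : Type*} [CommSemiring R]

/-- The multiplication `x * y` of dual numbers, with `ε` scaled by `s` in the right factor `y`.
The pair `(a, b)` stands for `a + b ε`. -/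
def twistedMul (s : R) : (R × R) ⊗[R] (R × R) →ₗ[R] R × R :=
  (LinearMap.mul' R R ∘ₗ TensorProduct.map (LinearMap.fst R R R) (LinearMap.fst R R R)).prod
    (LinearMap.mul' R R ∘ₗ TensorProduct.map (LinearMap.snd R R R) (LinearMap.fst R R R) +
      s • LinearMap.mul' R R ∘ₗ TensorProduct.map (LinearMap.fst R R R) (LinearMap.snd R R R))

/-- The comultiplication on `R × R` that is transpose to `twistedMul s`: the first basis vector is
grouplike and the second is primitive up to the twist by `s`. -/
def twistedComul (s : R) : R × R →ₗ[R] (R × R) ⊗[R] (R × R) :=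
  (LinearMap.toSpanSingleton R _ ((1, 0) ⊗ₜ (1, 0))).coprod
    (LinearMap.toSpanSingleton R _ ((0, 1) ⊗ₜ (1, 0) + s • (1, 0) ⊗ₜ (0, 1)))

/-- The substitution `ε ↦ r ε` on dual numbers, with `(a, b)` standing for `a + b ε`. -/
def scaleEps (r : R) : R × R →ₗ[R] R × R :=
  LinearMap.prodMap LinearMap.id (r • LinearMap.id)

/-- The exchange of the two coordinates of `R × R`. -/
def swapCoords : R × R →ₗ[R] R × R :=
  (LinearEquiv.prodComm R R R).toLinearMap

@[simp]
theorem twistedMul_tmul (s : R) (x y : R × R) :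
    twistedMul s (x ⊗ₜ y) = (x.1 * y.1, x.2 * y.1 + s * (x.1 * y.2)) := by
  simp [twistedMul]

@[simp]
theorem twistedComul_one_zero (s : R) : twistedComul s (1, 0) = (1, 0) ⊗ₜ (1, 0) := by
  simp [twistedComul]

@[simp]
theorem twistedComul_zero_one (s : R) :
    twistedComul s (0, 1) = (0, 1) ⊗ₜ (1, 0) + s • (1, 0) ⊗ₜ (0, 1) := by
  simp [twistedComul]

@[simp]
theorem scaleEps_apply (r : R) (x : R × R) : scaleEps r x = (x.1, r * x.2) := rfl

@[simp]
theorem swapCoords_apply (x : R × R) : swapCoords x = (x.2, x.1) := rfl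

theorem swapCoords_comp_swapCoords :
    (swapCoords : R × R →ₗ[R] R × R) ∘ₗ swapCoords = LinearMap.id := rfl

theorem scaleEps_comp_scaleEps_of_mul_eq_one {r r' : R} (h : r * r' = 1) :
    scaleEps r ∘ₗ scaleEps r' = LinearMap.id := by
  ext <;> simp [h]

theorem twistedMul_assoc (s r : R) :
    twistedMul s ∘ₗ TensorProduct.map LinearMap.id (twistedMul r) =
      twistedMul (s * r) ∘ₗ TensorProduct.map (twistedMul s) LinearMap.id ∘ₗ
        (TensorProduct.assoc R (R × R) (R × R) (R × R)).symm.toLinearMap := by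
  refine TensorProduct.ext_threefold' fun x y z => ?_
  simp only [LinearMap.comp_apply, LinearEquiv.coe_coe, TensorProduct.assoc_symm_tmul,
    TensorProduct.map_tmul, LinearMap.id_apply, twistedMul_tmul]
  congr 1 <;> ring

theorem linearMap_ext_prod {M : Type*} [AddCommMonoid M] [Module R M]
    {f g : R × R →ₗ[R] M} (h₁ : f (1, 0) = g (1, 0)) (h₂ : f (0, 1) = g (0, 1)) : f = g :=
  LinearMap.prod_ext (LinearMap.ext_ring h₁) (LinearMap.ext_ring h₂)

theorem twistedComul_coassoc (s r : R) :
    TensorProduct.map LinearMap.id (twistedComul r) ∘ₗ twistedComul s =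
      (TensorProduct.assoc R (R × R) (R × R) (R × R)).toLinearMap ∘ₗ
        TensorProduct.map (twistedComul s) LinearMap.id ∘ₗ twistedComul (s * r) := by
  apply linearMap_ext_prod
  · simp
  · simp [TensorProduct.tmul_add, TensorProduct.add_tmul, ← TensorProduct.smul_tmul',
      add_assoc, mul_smul]

end TwistedDualNumbers

section Triples

variable (t₁ t₂ : Triple)

theorem lam_T4 : (T4 t₁ t₂).lam = t₁.lam + t₂.lam :=
  add_zero _

theorem lam_T7 : (T7 t₁ t₂).lam = t₁.lam + t₂.lam := by
  change t₁.lam + t₂.lam + 0 + -0 + -0 + 0 = _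
  simp

theorem sg_T4 : (T4 t₁ t₂).sg = t₁.sg + t₂.sg :=
  add_zero _

theorem sg_T7 : (T7 t₁ t₂).sg = t₁.sg + t₂.sg + 1 := by
  change t₁.sg + t₂.sg + 0 + -0 + -0 + 1 = _
  simp

theorem sgn_add (a b : ZMod 2) : sgn (a + b) = sgn a * sgn b := by
  have add_eq_zero : a + b = 0 ↔ (a = 0 ↔ b = 0) := by decide +revert
  by_cases ha : a = 0 <;> by_cases hb : b = 0 <;> simp [sgn, add_eq_zero, ha, hb]

theorem sgn_sg_T4 : sgn (T4 t₁ t₂).sg = sgn t₁.sg * sgn t₂.sg := by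
  rw [sg_T4, sgn_add]

theorem neg_sgn_sg_T7 : -sgn (T7 t₁ t₂).sg = -sgn t₁.sg * -sgn t₂.sg := by
  have sgn_one : sgn 1 = -1 := by simp [sgn]
  rw [sg_T7, sgn_add, sgn_add, sgn_one]
  ring

end Triples

section Intertwiners

variable (t₁ t₂ t₃ : Triple)

theorem Ymap_eq_twistedComul : Ymap t₁ t₂ = twistedComul (sgn t₁.sg) := rfl

theorem Y'map_eq_twistedComul :
    Y'map t₁ t₂ =
      TensorProduct.map (swapCoords ∘ₗ scaleEps t₁.lam) (swapCoords ∘ₗ scaleEps t₂.lam) ∘ₗ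
        twistedComul (-sgn t₁.sg) ∘ₗ (scaleEps (t₁.lam + t₂.lam)⁻¹ ∘ₗ swapCoords) := by
  apply linearMap_ext_prod
  · have image_unit (a : ℚ) : swapCoords (scaleEps a (1, 0)) = ww := by simp [ww]
    have image_eps (a : ℚ) : swapCoords (scaleEps a (0, 1)) = a • vv := by simp [vv]
    have preimage_vv (a : ℚ) : scaleEps a (swapCoords (1, 0)) = a • (0, 1) := by simp
    simp only [LinearMap.comp_apply, preimage_vv, map_smul, twistedComul_zero_one, map_add,
      TensorProduct.map_tmul, image_unit, image_eps, TensorProduct.tmul_smul,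
      ← TensorProduct.smul_tmul']
    simp only [Y'map, bmap, LinearMap.coprod_apply, LinearMap.toSpanSingleton_apply, one_smul,
      zero_smul, add_zero]
    module
  · simp [Y'map, bmap, ww]

theorem Lmap_eq_twistedMul :
    Lmap t₁ t₂ =
      scaleEps (t₁.lam + t₂.lam)⁻¹ ∘ₗ twistedMul (sgn t₁.sg) ∘ₗ
        TensorProduct.map (scaleEps t₁.lam) (scaleEps t₂.lam) := by
  refine TensorProduct.ext' fun x y => ?_
  simp only [Lmap, TensorProduct.lift.tmul, LinearMap.mk₂_apply, LinearMap.comp_apply,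
    TensorProduct.map_tmul, scaleEps_apply, twistedMul_tmul]
  congr 1
  ring

theorem L'map_eq_twistedMul :
    L'map t₁ t₂ =
      swapCoords ∘ₗ twistedMul (-sgn t₁.sg) ∘ₗ TensorProduct.map swapCoords swapCoords := by
  refine TensorProduct.ext' fun x y => ?_
  simp only [L'map, TensorProduct.lift.tmul, LinearMap.mk₂_apply, LinearMap.comp_apply,
    TensorProduct.map_tmul, swapCoords_apply, twistedMul_tmul]
  congr 1
  ring

theorem Ymap_coassoc :
    TensorProduct.map LinearMap.id (Ymap t₂ t₃) ∘ₗ Ymap t₁ (T6 t₂ t₃) =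
      (TensorProduct.assoc ℚ V V V).toLinearMap
        ∘ₗ TensorProduct.map (Ymap t₁ t₂) LinearMap.id ∘ₗ Ymap (T4 t₁ t₂) t₃ := by
  simp only [Ymap_eq_twistedComul, sgn_sg_T4]
  exact twistedComul_coassoc _ _

variable {t₁ t₂ t₃}

theorem Y'map_coassoc (h₁₂ : t₁.lam + t₂.lam ≠ 0) (h₂₃ : t₂.lam + t₃.lam ≠ 0) :
    TensorProduct.map LinearMap.id (Y'map t₂ t₃) ∘ₗ Y'map t₁ (T9 t₂ t₃) =
      (TensorProduct.assoc ℚ V V V).toLinearMap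
        ∘ₗ TensorProduct.map (Y'map t₁ t₂) LinearMap.id ∘ₗ Y'map (T7 t₁ t₂) t₃ := by
  have cancel {r : ℚ} (hr : r ≠ 0) :
      (scaleEps r⁻¹ ∘ₗ swapCoords) ∘ₗ swapCoords ∘ₗ scaleEps r = LinearMap.id :=
    scaleEps_comp_scaleEps_of_mul_eq_one (inv_mul_cancel₀ hr)
  have lam_T9 : (T9 t₂ t₃).lam = t₂.lam + t₃.lam := lam_T7 t₂ t₃
  simp only [Y'map_eq_twistedComul, neg_sgn_sg_T7, lam_T7, lam_T9, add_assoc]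
  exact comul_coassoc_transport (twistedComul_coassoc _ _) (cancel h₁₂) (cancel h₂₃) _ _ _ _

theorem Lmap_assoc (h₁₂ : t₁.lam + t₂.lam ≠ 0) (h₂₃ : t₂.lam + t₃.lam ≠ 0) :
    Lmap t₁ (T6 t₂ t₃) ∘ₗ TensorProduct.map LinearMap.id (Lmap t₂ t₃) =
      Lmap (T4 t₁ t₂) t₃ ∘ₗ TensorProduct.map (Lmap t₁ t₂) LinearMap.id
        ∘ₗ (TensorProduct.assoc ℚ V V V).symm.toLinearMap := by
  have cancel {r : ℚ} (hr : r ≠ 0) : scaleEps r ∘ₗ scaleEps r⁻¹ = LinearMap.id :=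
    scaleEps_comp_scaleEps_of_mul_eq_one (mul_inv_cancel₀ hr)
  have lam_T6 : (T6 t₂ t₃).lam = t₂.lam + t₃.lam := lam_T4 t₂ t₃
  simp only [Lmap_eq_twistedMul, sgn_sg_T4, lam_T4, lam_T6, add_assoc]
  exact mul_assoc_transport (twistedMul_assoc _ _) (cancel h₁₂) (cancel h₂₃) _ _ _ _

variable (t₁ t₂ t₃)

theorem L'map_assoc :
    L'map t₁ (T9 t₂ t₃) ∘ₗ TensorProduct.map LinearMap.id (L'map t₂ t₃) =
      L'map (T7 t₁ t₂) t₃ ∘ₗ TensorProduct.map (L'map t₁ t₂) LinearMap.id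
        ∘ₗ (TensorProduct.assoc ℚ V V V).symm.toLinearMap := by
  simp only [L'map_eq_twistedMul, neg_sgn_sg_T7]
  exact mul_assoc_transport (twistedMul_assoc _ _) swapCoords_comp_swapCoords
    swapCoords_comp_swapCoords _ _ _ _

end Intertwiners

/-- Lemma 22: associativity identities for Y, Y', L, L'. -/
theorem stmt11 (t₁ t₂ t₃ : Triple)
    (h₁ : t₁.lam ≠ 0) (h₂ : t₂.lam ≠ 0) (h₃ : t₃.lam ≠ 0)
    (h₁₂ : t₁.lam + t₂.lam ≠ 0) (h₂₃ : t₂.lam + t₃.lam ≠ 0)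
    (h₁₂₃ : t₁.lam + t₂.lam + t₃.lam ≠ 0) :
    TensorProduct.map LinearMap.id (Ymap t₂ t₃) ∘ₗ Ymap t₁ (T6 t₂ t₃) =
      (TensorProduct.assoc ℚ V V V).toLinearMap
        ∘ₗ TensorProduct.map (Ymap t₁ t₂) LinearMap.id ∘ₗ Ymap (T4 t₁ t₂) t₃ ∧
    TensorProduct.map LinearMap.id (Y'map t₂ t₃) ∘ₗ Y'map t₁ (T9 t₂ t₃) =
      (TensorProduct.assoc ℚ V V V).toLinearMap
        ∘ₗ TensorProduct.map (Y'map t₁ t₂) LinearMap.id ∘ₗ Y'map (T7 t₁ t₂) t₃ ∧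
    Lmap t₁ (T6 t₂ t₃) ∘ₗ TensorProduct.map LinearMap.id (Lmap t₂ t₃) =
      Lmap (T4 t₁ t₂) t₃ ∘ₗ TensorProduct.map (Lmap t₁ t₂) LinearMap.id
        ∘ₗ (TensorProduct.assoc ℚ V V V).symm.toLinearMap ∧
    L'map t₁ (T9 t₂ t₃) ∘ₗ TensorProduct.map LinearMap.id (L'map t₂ t₃) =
      L'map (T7 t₁ t₂) t₃ ∘ₗ TensorProduct.map (L'map t₁ t₂) LinearMap.id
        ∘ₗ (TensorProduct.assoc ℚ V V V).symm.toLinearMap :=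
  ⟨Ymap_coassoc t₁ t₂ t₃, Y'map_coassoc h₁₂ h₂₃, Lmap_assoc h₁₂ h₂₃, L'map_assoc t₁ t₂ t₃⟩

end
end
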